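/- arXiv:1209.5277 — 2 statements merged into one kernel-verified Lean document; each statement's English description precedes it below -/
import Mathlib

section
/- Assume α_i + i/r > 0 for every i = 0,…,r−1 (in particular α_0 > 0). Then for every x ∈ ℂ, j_μ(x) = c_μ ∫_{[0,1]^r} cos_r(x · u_0 u_1 ⋯ u_{r−1}) w_μ(u) du. -/
open Complex MeasureTheory Real Filter Topology

noncomputable section

/-- ω = exp(2πi/r) -/
def om (r : ℕ) : ℂ := Complex.exp (2 * Real.pi * Complex.I / r)

/-- θ = exp(iπ/r) -/
def th (r : ℕ) : ℂ := Complex.exp (Real.pi * Complex.I / r)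

/-- projector T_k -/
def Tk (r k : ℕ) (g : ℂ → ℂ) (x : ℂ) : ℂ :=
  (r : ℂ)⁻¹ * ∑ n ∈ Finset.range r, om r ^ (k * n) * g (om r ^ n * x)

/-- L_a f = f' + (a/x) f -/
def Lop (a : ℝ) (f : ℂ → ℂ) (x : ℂ) : ℂ := deriv f x + (a / x) * f x

/-- a_k = r α_k + k -/
def acoef (r : ℕ) (α : ℕ → ℝ) (k : ℕ) : ℝ := r * α k + k

/-- Δ_μ = L_{a_{r-1}} ∘ ⋯ ∘ L_{a_0} -/
def Delta (r : ℕ) (α : ℕ → ℝ) (f : ℂ → ℂ) : ℂ → ℂ :=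
  (List.range r).foldl (fun g i => Lop (acoef r α i) g) f

/-- D_μ -/
def Dop (r : ℕ) (α : ℕ → ℝ) (f : ℂ → ℂ) (x : ℂ) : ℂ :=
  deriv f x + (1 / x) * ∑ k ∈ Finset.range r, ((acoef r α k : ℝ) : ℂ) * Tk r k f x

/-- Pochhammer symbol (β)_n -/
def poch (β : ℝ) (n : ℕ) : ℝ := (ascPochhammer ℝ n).eval β

/-- Bessel function of vector index -/
def jmu (r : ℕ) (α : ℕ → ℝ) (z : ℂ) : ℂ :=
  ∑' n : ℕ, (-1 : ℂ) ^ n * z ^ (n * r) /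
    ((∏ i ∈ Finset.range r, ((poch (α i + 1) n : ℝ) : ℂ)) * (r : ℂ) ^ (n * r))

/-- r-Dunkl kernel -/
def Emu (r : ℕ) (α : ℕ → ℝ) (z : ℂ) : ℂ :=
  ∑ k ∈ Finset.range r, th r ^ (-(k : ℤ)) * (Dop r α)^[k] (jmu r α) z

/-- generalized cosine -/
def cosr (r : ℕ) (z : ℂ) : ℂ :=
  ∑' n : ℕ, (-1 : ℂ) ^ n * z ^ (n * r) /
    ((∏ i ∈ Finset.range r, ((poch (1 - (i : ℝ) / r) n : ℝ) : ℂ)) * (r : ℂ) ^ (n * r))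

/-- weight w_μ on [0,1]^r -/
def wmu (r : ℕ) (α : ℕ → ℝ) (u : Fin r → ℝ) : ℝ :=
  ∏ i : Fin r, (1 - u i ^ r) ^ (α i.1 + (i.1 : ℝ) / r - 1) * u i ^ (r - (i.1 + 1))

/-- constant c_μ -/
def cmu (r : ℕ) (α : ℕ → ℝ) : ℝ :=
  ∏ i ∈ Finset.range r,
    r * Real.Gamma (α i + 1) / (Real.Gamma (α i + (i : ℝ) / r) * Real.Gamma (1 - (i : ℝ) / r))

/-- L_{a_{k-1}} ∘ ⋯ ∘ L_{a_0} -/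
def Lcomp (r : ℕ) (α : ℕ → ℝ) (k : ℕ) (f : ℂ → ℂ) : ℂ → ℂ :=
  (List.range k).foldl (fun g i => Lop (acoef r α i) g) f

/-- r-Riemann–Liouville on the half line -/
def Rop (r : ℕ) (a : ℝ) (g : ℝ → ℂ) (x : ℝ) : ℂ :=
  ∫ t in (0:ℝ)..1, g (x * t) * (((1 - t ^ r) ^ (a - 1) : ℝ) : ℂ)

/-- r-Riemann–Liouville along rays in ℂ -/
def RopC (r : ℕ) (a : ℝ) (f : ℂ → ℂ) (z : ℂ) : ℂ :=
  ∫ t in (0:ℝ)..1, f (z * t) * (((1 - t ^ r) ^ (a - 1) : ℝ) : ℂ)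

/-- the operator M h = (1/(r x^{r-1})) h' -/
def Mop (r : ℕ) (h : ℝ → ℂ) (x : ℝ) : ℂ := ((1 / (r * x ^ (r - 1)) : ℝ) : ℂ) * deriv h x

/-- hermitian product ⟨f,g⟩_a -/
def inr (r : ℕ) (a : ℝ) (f g : ℂ → ℂ) : ℂ :=
  ∫ t in Set.Ioi (0:ℝ),
    (∑ m ∈ Finset.range r, f (om r ^ m * t) * (starRingEnd ℂ) (g (om r ^ m * t))) *
      ((t ^ a : ℝ) : ℂ)

/-- transmutation operator V_μ -/
def Vmu (r : ℕ) (α : ℕ → ℝ) (h : ℂ → ℂ) (x : ℂ) : ℂ :=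
  (cmu r α : ℂ) *
    ∫ u in Set.univ.pi (fun _ : Fin r => Set.Icc (0:ℝ) 1),
      (Tk r 0 (fun z => h (z * ∏ i, (u i : ℂ))) x +
        ∑ k ∈ Finset.Ico 1 r,
          th r ^ (-(k : ℤ)) * Tk r k (Lcomp r α k (fun z => h (z * ∏ i, (u i : ℂ)))) x) *
        ((wmu r α u : ℝ) : ℂ)

/-!
In the variable `-(z / r) ^ r`, both `jmu` and `cosr` are series of the form
`∑ yⁿ / ∏ᵢ (cᵢ)ₙ`, with `cᵢ = αᵢ + 1` and `cᵢ = 1 - i / r` respectively. If the `Tᵢ` are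
independent with laws `Beta(bᵢ, aᵢ)`, then `𝔼[Tᵢⁿ] = (bᵢ)ₙ / (bᵢ + aᵢ)ₙ`, so averaging the series
with parameters `b` at `y * ∏ᵢ Tᵢ` gives, term by term, the series with parameters `b + a` at `y`.
The theorem is the case `bᵢ = 1 - i / r`, `aᵢ = αᵢ + i / r`, written in the coordinates
`Tᵢ = uᵢ ^ r`.
-/

open ProbabilityTheory (beta beta_pos beta_eq_betaIntegralReal)

section Pochhammer

lemma poch_succ (β : ℝ) (n : ℕ) : poch β (n + 1) = poch β n * (β + n) :=
  ascPochhammer_succ_eval n β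

lemma poch_pos {β : ℝ} (hβ : 0 < β) (n : ℕ) : 0 < poch β n :=
  ascPochhammer_pos n β hβ

lemma Gamma_add_natCast_eq_poch_mul {β : ℝ} (hβ : ∀ k : ℕ, β ≠ -k) (n : ℕ) :
    Real.Gamma (β + n) = poch β n * Real.Gamma β := by
  induction n with
  | zero => simp [poch]
  | succ n ih =>
    have hne : β + n ≠ 0 := fun h => hβ n (eq_neg_of_add_eq_zero_left h)
    rw [Nat.cast_succ, ← add_assoc, Real.Gamma_add_one hne, ih, poch_succ]
    ring

lemma beta_add_natCast_left {a b : ℝ} (ha : 0 < a) (hb : 0 < b) (n : ℕ) :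
    beta (b + n) a = beta b a * (poch b n / poch (b + a) n) := by
  have ne_neg_natCast {c : ℝ} (hc : 0 < c) (k : ℕ) : c ≠ -k :=
    ((neg_nonpos.mpr k.cast_nonneg).trans_lt hc).ne'
  rw [beta, beta, add_right_comm, Gamma_add_natCast_eq_poch_mul (ne_neg_natCast hb),
    Gamma_add_natCast_eq_poch_mul (ne_neg_natCast (add_pos hb ha))]
  ring

end Pochhammer

section PochSeries

variable {ι : Type*} [Fintype ι]

/-- The series `∑ zⁿ / ∏ᵢ (cᵢ)ₙ`, i.e. the generalized hypergeometric series `₁F_q(1; c; z)` with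
`q` the number of parameters. Parameters are indexed by a finite type, and a vanishing denominator
makes its term zero. -/
def pochSeries (c : ι → ℝ) (z : ℂ) : ℂ :=
  ∑' n : ℕ, z ^ n / ∏ i, ((poch (c i) n : ℝ) : ℂ)

lemma pochSeries_mul (c : ι → ℝ) (y t : ℂ) :
    pochSeries c (y * t) = ∑' n : ℕ, y ^ n / (∏ i, ((poch (c i) n : ℝ) : ℂ)) * t ^ n :=
  tsum_congr fun n => by rw [mul_pow, mul_div_right_comm]

lemma tendsto_div_prod_add_natCast_atTop [Nonempty ι] (c : ι → ℝ) (z : ℂ) :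
    Tendsto (fun n : ℕ => z / ∏ i, ((c i + n : ℝ) : ℂ)) atTop (𝓝 0) := by
  have tendsto_inv (i : ι) : Tendsto (fun n : ℕ => ((c i + n : ℝ) : ℂ)⁻¹) atTop (𝓝 0) := by
    have h := (tendsto_atTop_add_const_left _ (c i) tendsto_natCast_atTop_atTop).inv_tendsto_atTop
    simpa [Function.comp_def] using (Complex.continuous_ofReal.tendsto 0).comp h
  have h := (tendsto_finsetProd Finset.univ fun i _ => tendsto_inv i).const_mul z
  simpa [div_eq_mul_inv] using h

lemma summable_pow_div_prod_poch [Nonempty ι] (c : ι → ℝ) (z : ℂ) :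
    Summable fun n : ℕ => z ^ n / ∏ i, ((poch (c i) n : ℝ) : ℂ) := by
  have ratio_le : ∀ᶠ n : ℕ in atTop, ‖z / ∏ i, ((c i + n : ℝ) : ℂ)‖ ≤ 1 / 2 :=
    (tendsto_div_prod_add_natCast_atTop c z).norm.eventually_le_const (by norm_num)
  refine summable_of_ratio_norm_eventually_le (r := 1 / 2) (by norm_num) ?_
  filter_upwards [ratio_le] with n hn
  have term_succ : z ^ (n + 1) / ∏ i, ((poch (c i) (n + 1) : ℝ) : ℂ) =
      z / (∏ i, ((c i + n : ℝ) : ℂ)) * (z ^ n / ∏ i, ((poch (c i) n : ℝ) : ℂ)) := by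
    simp only [poch_succ, Complex.ofReal_mul, Finset.prod_mul_distrib]
    ring
  rw [term_succ, norm_mul]
  gcongr

lemma pochSeries_neg_div_pow (r : ℕ) (c : ℕ → ℝ) (z : ℂ) :
    pochSeries (fun i : Fin r => c i) (-(z / r) ^ r) =
      ∑' n : ℕ, (-1 : ℂ) ^ n * z ^ (n * r) /
        ((∏ i ∈ Finset.range r, ((poch (c i) n : ℝ) : ℂ)) * (r : ℂ) ^ (n * r)) := by
  refine tsum_congr fun n => ?_
  rw [Fin.prod_univ_eq_prod_range (fun i => ((poch (c i) n : ℝ) : ℂ)), neg_pow, ← pow_mul, div_pow,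
    mul_comm r n]
  ring

end PochSeries

section BetaIntegral

lemma ofReal_rpow_mul_one_sub_rpow {x : ℝ} (hx : x ∈ Set.Icc (0 : ℝ) 1) (s t : ℝ) :
    ((x ^ s * (1 - x) ^ t : ℝ) : ℂ) = (x : ℂ) ^ (s : ℂ) * (1 - (x : ℂ)) ^ (t : ℂ) := by
  rw [Complex.ofReal_mul, Complex.ofReal_cpow hx.1, Complex.ofReal_cpow (sub_nonneg.mpr hx.2),
    Complex.ofReal_sub, Complex.ofReal_one]

variable {a b : ℝ}

lemma integrableOn_rpow_mul_one_sub_rpow (ha : 0 < a) (hb : 0 < b) :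
    IntegrableOn (fun x : ℝ => x ^ (b - 1) * (1 - x) ^ (a - 1)) (Set.Ioo 0 1) := by
  have h : IntervalIntegrable _ _ _ _ :=
    Complex.betaIntegral_convergent (u := b) (v := a) (by simpa) (by simpa)
  rw [intervalIntegrable_iff_integrableOn_Ioo_of_le zero_le_one] at h
  refine IntegrableOn.congr_fun (f := fun x : ℝ => ((x : ℂ) ^ ((b : ℂ) - 1) *
    (1 - (x : ℂ)) ^ ((a : ℂ) - 1)).re) h.re (fun x hx => ?_) measurableSet_Ioo
  rw [← Complex.ofReal_re (x ^ (b - 1) * (1 - x) ^ (a - 1)),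
    ofReal_rpow_mul_one_sub_rpow (Set.Ioo_subset_Icc_self hx)]
  push_cast
  rfl

lemma integral_rpow_mul_one_sub_rpow (ha : 0 < a) (hb : 0 < b) :
    ∫ x in Set.Ioo (0 : ℝ) 1, x ^ (b - 1) * (1 - x) ^ (a - 1) = beta b a := by
  have complex_integral : Complex.betaIntegral b a =
      ∫ x in Set.Ioo (0 : ℝ) 1, ((x ^ (b - 1) * (1 - x) ^ (a - 1) : ℝ) : ℂ) := by
    rw [Complex.betaIntegral, intervalIntegral.integral_of_le zero_le_one,
      integral_Ioc_eq_integral_Ioo]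
    refine setIntegral_congr_fun measurableSet_Ioo fun x hx => ?_
    rw [ofReal_rpow_mul_one_sub_rpow (Set.Ioo_subset_Icc_self hx)]
    push_cast
    rfl
  rw [beta_eq_betaIntegralReal b a hb ha, complex_integral, integral_complex_ofReal,
    Complex.ofReal_re]

end BetaIntegral

section RpowSubstitution

variable {E : Type*} [NormedAddCommGroup E] [NormedSpace ℝ E] {p : ℝ} {g : ℝ → E}

lemma image_rpow_Ioo_zero_one (hp : 0 < p) :
    (fun u : ℝ => u ^ p) '' Set.Ioo 0 1 = Set.Ioo 0 1 := by
  refine Set.Subset.antisymm ?_ fun t ht => ?_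
  · rintro _ ⟨u, hu, rfl⟩
    exact ⟨Real.rpow_pos_of_pos hu.1 p, Real.rpow_lt_one hu.1.le hu.2 hp⟩
  · exact ⟨t ^ p⁻¹, ⟨Real.rpow_pos_of_pos ht.1 _, Real.rpow_lt_one ht.1.le ht.2 (inv_pos.mpr hp)⟩,
      Real.rpow_inv_rpow ht.1.le hp.ne'⟩

lemma integrableOn_Ioo_zero_one_comp_rpow_iff (hp : 0 < p) :
    IntegrableOn (fun u : ℝ => (p * u ^ (p - 1)) • g (u ^ p)) (Set.Ioo 0 1) ↔
      IntegrableOn g (Set.Ioo 0 1) := by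
  have h := integrableOn_image_iff_integrableOn_deriv_smul_of_monotoneOn
    (measurableSet_Ioo (a := (0 : ℝ)) (b := 1))
    (fun u hu => (Real.hasDerivAt_rpow_const (Or.inl hu.1.ne')).hasDerivWithinAt)
    (fun u hu v _ huv => Real.rpow_le_rpow hu.1.le huv hp.le) g
  rwa [image_rpow_Ioo_zero_one hp, Iff.comm] at h

lemma integral_comp_rpow_Ioo_zero_one (hp : 0 < p) :
    ∫ u in Set.Ioo (0 : ℝ) 1, (p * u ^ (p - 1)) • g (u ^ p) = ∫ t in Set.Ioo (0 : ℝ) 1, g t := by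
  have h := integral_image_eq_integral_deriv_smul_of_monotoneOn
    (measurableSet_Ioo (a := (0 : ℝ)) (b := 1))
    (fun u hu => (Real.hasDerivAt_rpow_const (Or.inl hu.1.ne')).hasDerivWithinAt)
    (fun u hu v _ huv => Real.rpow_le_rpow hu.1.le huv hp.le) g
  rwa [image_rpow_Ioo_zero_one hp, eq_comm] at h

end RpowSubstitution

section BetaPowWeight

/-- The density on `(0, 1)`, up to the constant factor `p / beta b a`, of `U` when `U ^ p` has the
law `Beta(b, a)`. -/
def betaPowWeight (p b a u : ℝ) : ℝ :=
  (1 - u ^ p) ^ (a - 1) * u ^ (p * b - 1)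

variable {p a b u : ℝ}

lemma rpow_pow_mul_betaPowWeight (hu : 0 < u) (p b a : ℝ) (n : ℕ) :
    (u ^ p) ^ n * betaPowWeight p b a u = betaPowWeight p (b + n) a u := by
  have exponent : p * (b + n) - 1 = p * n + (p * b - 1) := by ring
  rw [betaPowWeight, betaPowWeight, exponent, Real.rpow_add hu, Real.rpow_mul hu.le,
    Real.rpow_natCast]
  ring

lemma mul_betaPowWeight_eq (hu : 0 < u) (p b a : ℝ) :
    p * betaPowWeight p b a u =
      (p * u ^ (p - 1)) • ((u ^ p) ^ (b - 1) * (1 - u ^ p) ^ (a - 1)) := by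
  have exponent : p * b - 1 = (p - 1) + p * (b - 1) := by ring
  rw [betaPowWeight, exponent, Real.rpow_add hu, Real.rpow_mul hu.le, smul_eq_mul]
  ring

lemma integrableOn_betaPowWeight (hp : 0 < p) (ha : 0 < a) (hb : 0 < b) :
    IntegrableOn (betaPowWeight p b a) (Set.Ioo 0 1) := by
  have h := (integrableOn_Ioo_zero_one_comp_rpow_iff hp).mpr
    (integrableOn_rpow_mul_one_sub_rpow ha hb)
  have h_mul : IntegrableOn (fun u => p * betaPowWeight p b a u) (Set.Ioo 0 1) :=
    h.congr_fun (fun u hu => (mul_betaPowWeight_eq hu.1 p b a).symm) measurableSet_Ioo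
  exact (integrable_const_mul_iff hp.ne'.isUnit _).mp h_mul

lemma integral_betaPowWeight (hp : 0 < p) (ha : 0 < a) (hb : 0 < b) :
    ∫ u in Set.Ioo (0 : ℝ) 1, betaPowWeight p b a u = beta b a / p := by
  rw [eq_div_iff hp.ne', mul_comm, ← integral_const_mul, ← integral_rpow_mul_one_sub_rpow ha hb]
  exact (setIntegral_congr_fun measurableSet_Ioo fun u hu => mul_betaPowWeight_eq hu.1 p b a).trans
    (integral_comp_rpow_Ioo_zero_one (g := fun t => t ^ (b - 1) * (1 - t) ^ (a - 1)) hp)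

end BetaPowWeight

section Cube

variable {ι : Type*} [Fintype ι] {p : ℝ} {a b : ι → ℝ}

lemma integrableOn_prod_betaPowWeight (hp : 0 < p) (ha : ∀ i, 0 < a i) (hb : ∀ i, 0 < b i) :
    IntegrableOn (fun u : ι → ℝ => ∏ i, betaPowWeight p (b i) (a i) (u i))
      (Set.univ.pi fun _ => Set.Ioo 0 1) := by
  rw [IntegrableOn, volume_pi, Measure.restrict_pi_pi]
  exact Integrable.fintype_prod fun i => integrableOn_betaPowWeight hp (ha i) (hb i)

lemma integral_prod_betaPowWeight (hp : 0 < p) (ha : ∀ i, 0 < a i) (hb : ∀ i, 0 < b i) :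
    ∫ u in Set.univ.pi fun _ : ι => Set.Ioo (0 : ℝ) 1, ∏ i, betaPowWeight p (b i) (a i) (u i) =
      ∏ i, beta (b i) (a i) / p := by
  rw [volume_pi, Measure.restrict_pi_pi, integral_fintype_prod_eq_prod]
  exact Finset.prod_congr rfl fun i _ => integral_betaPowWeight hp (ha i) (hb i)

lemma integral_pow_mul_prod_betaPowWeight (hp : 0 < p) (ha : ∀ i, 0 < a i) (hb : ∀ i, 0 < b i)
    (n : ℕ) :
    ∫ u in Set.univ.pi fun _ : ι => Set.Ioo (0 : ℝ) 1,
        (∏ i, u i ^ p) ^ n * ∏ i, betaPowWeight p (b i) (a i) (u i) =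
      (∏ i, beta (b i) (a i) / p) * ∏ i, poch (b i) n / poch (b i + a i) n := by
  calc
    _ = ∫ u in Set.univ.pi fun _ : ι => Set.Ioo (0 : ℝ) 1,
          ∏ i, betaPowWeight p (b i + n) (a i) (u i) := by
      refine setIntegral_congr_fun (MeasurableSet.univ_pi fun _ => measurableSet_Ioo)
        fun u hu => ?_
      simp only [← Finset.prod_pow, ← Finset.prod_mul_distrib]
      exact Finset.prod_congr rfl fun i _ =>
        rpow_pow_mul_betaPowWeight (hu i (Set.mem_univ i)).1 p (b i) (a i) n
    _ = ∏ i, beta (b i + n) (a i) / p :=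
      integral_prod_betaPowWeight hp ha fun i => add_pos_of_pos_of_nonneg (hb i) n.cast_nonneg
    _ = _ := by
      rw [← Finset.prod_mul_distrib]
      refine Finset.prod_congr rfl fun i _ => ?_
      rw [beta_add_natCast_left (ha i) (hb i), mul_div_right_comm]

lemma prod_div_beta_mul_integral_pow_mul_prod_betaPowWeight (hp : 0 < p) (ha : ∀ i, 0 < a i)
    (hb : ∀ i, 0 < b i) (n : ℕ) :
    (∏ i, p / beta (b i) (a i)) *
        ∫ u in Set.univ.pi fun _ : ι => Set.Ioo (0 : ℝ) 1,
          (∏ i, u i ^ p) ^ n * ∏ i, betaPowWeight p (b i) (a i) (u i) =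
      (∏ i, poch (b i) n) / ∏ i, poch (b i + a i) n := by
  rw [integral_pow_mul_prod_betaPowWeight hp ha hb, ← mul_assoc, ← Finset.prod_mul_distrib,
    Finset.prod_eq_one, one_mul, Finset.prod_div_distrib]
  intro i _
  rw [div_mul_div_cancel₀ (beta_pos (hb i) (ha i)).ne', div_self hp.ne']

lemma ae_norm_prod_rpow_le_one (hp : 0 ≤ p) :
    ∀ᵐ u ∂volume.restrict (Set.univ.pi fun _ : ι => Set.Ioo (0 : ℝ) 1),
      ‖((∏ i, u i ^ p : ℝ) : ℂ)‖ ≤ 1 := by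
  refine ae_restrict_of_forall_mem (MeasurableSet.univ_pi fun _ => measurableSet_Ioo)
    fun u hu => ?_
  have rpow_nonneg (i : ι) : 0 ≤ u i ^ p := Real.rpow_nonneg (hu i (Set.mem_univ i)).1.le p
  have rpow_le_one (i : ι) : u i ^ p ≤ 1 :=
    Real.rpow_le_one (hu i (Set.mem_univ i)).1.le (hu i (Set.mem_univ i)).2.le hp
  rw [Complex.norm_real, Real.norm_of_nonneg (Finset.prod_nonneg fun i _ => rpow_nonneg i)]
  exact Finset.prod_le_one (fun i _ => rpow_nonneg i) fun i _ => rpow_le_one i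

end Cube

lemma integral_tsum_mul_pow_mul {X 𝕜 : Type*} [MeasurableSpace X] [RCLike 𝕜] {μ : Measure X}
    {c : ℕ → 𝕜} {f w : X → 𝕜} (hc : Summable fun n => ‖c n‖) (hf : AEStronglyMeasurable f μ)
    (hf_le : ∀ᵐ x ∂μ, ‖f x‖ ≤ 1) (hw : Integrable w μ) :
    ∫ x, (∑' n, c n * f x ^ n) * w x ∂μ = ∑' n, c n * ∫ x, f x ^ n * w x ∂μ := by
  have norm_le (n : ℕ) : ∀ᵐ x ∂μ, ‖f x ^ n * w x‖ ≤ ‖w x‖ := by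
    filter_upwards [hf_le] with x hx
    rw [norm_mul, norm_pow]
    exact mul_le_of_le_one_left (norm_nonneg _) (pow_le_one₀ (norm_nonneg _) hx)
  have integrable_term (n : ℕ) : Integrable (fun x => f x ^ n * w x) μ :=
    hw.mono ((hf.pow n).mul hw.1) (norm_le n)
  have summable_norm : Summable fun n => ∫ x, ‖c n * (f x ^ n * w x)‖ ∂μ := by
    refine (hc.mul_right (∫ x, ‖w x‖ ∂μ)).of_nonneg_of_le
      (fun n => integral_nonneg fun x => norm_nonneg _) fun n => ?_
    simp only [norm_mul (c n), integral_const_mul]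
    refine mul_le_mul_of_nonneg_left ?_ (norm_nonneg _)
    exact integral_mono_ae (integrable_term n).norm hw.norm (norm_le n)
  simp only [← tsum_mul_right, mul_assoc, ← integral_const_mul]
  exact (integral_tsum_of_summable_integral_norm
    (fun n => (integrable_term n).const_mul (c n)) summable_norm).symm

theorem pochSeries_add_eq_integral {ι : Type*} [Fintype ι] [Nonempty ι] {p : ℝ} {a b : ι → ℝ}
    (hp : 0 < p) (ha : ∀ i, 0 < a i) (hb : ∀ i, 0 < b i) (y : ℂ) :
    pochSeries (fun i => b i + a i) y =
      ((∏ i, p / beta (b i) (a i) : ℝ) : ℂ) *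
        ∫ u in Set.univ.pi fun _ : ι => Set.Ioo (0 : ℝ) 1,
          pochSeries b (y * ((∏ i, u i ^ p : ℝ) : ℂ)) *
            ((∏ i, betaPowWeight p (b i) (a i) (u i) : ℝ) : ℂ) := by
  have measurable_prod : Measurable fun u : ι → ℝ => ((∏ i, u i ^ p : ℝ) : ℂ) := by fun_prop
  have exchange := integral_tsum_mul_pow_mul (summable_pow_div_prod_poch b y).norm
    measurable_prod.aestronglyMeasurable (ae_norm_prod_rpow_le_one hp.le)
    (integrableOn_prod_betaPowWeight hp ha hb).ofReal
  simp only [RCLike.ofReal_eq_complex_ofReal] at exchange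
  simp only [pochSeries_mul, exchange, ← tsum_mul_left]
  refine tsum_congr fun n => ?_
  have poch_ne_zero : ∏ i, ((poch (b i) n : ℝ) : ℂ) ≠ 0 :=
    Finset.prod_ne_zero_iff.mpr fun i _ => Complex.ofReal_ne_zero.mpr (poch_pos (hb i) n).ne'
  have moment := congrArg Complex.ofReal
    (prod_div_beta_mul_integral_pow_mul_prod_betaPowWeight hp ha hb n)
  rw [Complex.ofReal_mul, ← integral_complex_ofReal, Complex.ofReal_div] at moment
  simp only [← Complex.ofReal_pow, ← Complex.ofReal_mul]
  rw [mul_left_comm, moment, Complex.ofReal_prod, Complex.ofReal_prod,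
    div_mul_div_cancel₀ poch_ne_zero]

section VectorIndex

variable (r : ℕ) (α : ℕ → ℝ)

lemma jmu_eq_pochSeries (z : ℂ) :
    jmu r α z = pochSeries (fun i : Fin r => α i + 1) (-(z / r) ^ r) :=
  (pochSeries_neg_div_pow r (fun i => α i + 1) z).symm

lemma cosr_eq_pochSeries (z : ℂ) :
    cosr r z = pochSeries (fun i : Fin r => 1 - (i : ℝ) / r) (-(z / r) ^ r) :=
  (pochSeries_neg_div_pow r (fun i => 1 - (i : ℝ) / r) z).symm

lemma cmu_eq_prod_div_beta :
    cmu r α = ∏ i : Fin r, (r : ℝ) / beta (1 - (i : ℝ) / r) (α i + (i : ℝ) / r) := by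
  rw [cmu, ← Fin.prod_univ_eq_prod_range]
  refine Finset.prod_congr rfl fun i _ => ?_
  rw [beta, div_div_eq_mul_div, sub_add_add_cancel, add_comm (1 : ℝ), mul_comm (Real.Gamma (1 - _))]

lemma wmu_eq_prod_betaPowWeight (u : Fin r → ℝ) :
    wmu r α u = ∏ i : Fin r, betaPowWeight r (1 - (i : ℝ) / r) (α i + (i : ℝ) / r) (u i) := by
  refine Finset.prod_congr rfl fun i _ => ?_
  have hr : (r : ℝ) ≠ 0 := Nat.cast_ne_zero.mpr i.pos.ne'
  have exponent : (r : ℝ) * (1 - (i : ℝ) / r) - 1 = (r - (i.1 + 1) : ℕ) := by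
    rw [Nat.cast_sub i.2]
    push_cast
    field_simp
    ring
  rw [betaPowWeight, exponent, Real.rpow_natCast, Real.rpow_natCast]

end VectorIndex

theorem stmt6 (r : ℕ) (hr : 2 ≤ r) (α : ℕ → ℝ)
    (hα : ∀ i < r, ∀ n : ℕ, α i ≠ -((n : ℝ) + 1))
    (hpos : ∀ i < r, 0 < α i + (i : ℝ) / r) :
    ∀ x : ℂ,
      jmu r α x = (cmu r α : ℂ) *
        ∫ u in Set.univ.pi (fun _ : Fin r => Set.Icc (0:ℝ) 1),
          cosr r (x * ∏ i, (u i : ℂ)) * ((wmu r α u : ℝ) : ℂ) := by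
  intro x
  have hr0 : 0 < r := by omega
  have : Nonempty (Fin r) := Fin.pos_iff_nonempty.mp hr0
  have one_sub_pos (i : Fin r) : 0 < 1 - (i : ℝ) / r :=
    sub_pos.mpr ((div_lt_one (by positivity)).mpr (by exact_mod_cast i.2))
  have parameters (i : Fin r) : 1 - (i : ℝ) / r + (α i + (i : ℝ) / r) = α i + 1 := by ring
  have argument (u : Fin r → ℝ) : -(x * (∏ i, (u i : ℂ)) / r) ^ r =
      -(x / r) ^ r * ((∏ i, u i ^ (r : ℝ) : ℝ) : ℂ) := by
    simp only [Real.rpow_natCast, Finset.prod_pow]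
    push_cast
    ring
  have integral_rep := pochSeries_add_eq_integral (p := r) (by positivity)
    (fun i : Fin r => hpos i i.2) one_sub_pos (-(x / r) ^ r)
  simp only [parameters, ← cmu_eq_prod_div_beta, ← wmu_eq_prod_betaPowWeight, ← argument,
    ← cosr_eq_pochSeries, ← jmu_eq_pochSeries] at integral_rep
  rw [integral_rep, Set.pi_univ_Icc, volume_pi,
    setIntegral_congr_set Measure.univ_pi_Ioo_ae_eq_Icc]
end
end

section
/- For every integer r ≥ 2 and every z ∈ ℂ, (1/r) Σ_{k=0}^{r−1} exp(θ ω^k z) = Σ_{n=0}^∞ (−1)^n z^{nr} / ((1)_n (1−1/r)_n ⋯ (1−(r−1)/r)_n r^{nr}), where ω = exp(2πi/r) and θ = exp(iπ/r). That is, the r-even part T_0 of the function z ↦ e^{θz} equals the generalized cosine cos_r. -/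
open Complex MeasureTheory Real Filter Topology

noncomputable section

/-! Averaging the exponential series over the rotations `z ↦ ω ^ k * z` keeps exactly the terms
whose degree is a multiple `n * r` of `r`, since the power sums of the `r`-th roots of unity vanish
in every other degree. In these degrees `θ ^ (n * r) = (-1) ^ n`, and Gauss's multiplication formula
for the Pochhammer symbol, `(x)_{nr} = r ^ (n * r) * ∏_{i < r} ((x + i) / r)_n`, at `x = 1`
identifies the denominator of `cosr` with `(n * r)!`. -/

open scoped Nat

section Pochhammer

theorem ascPochhammer_eval_eq_prod_range {R : Type*} [CommSemiring R] (n : ℕ) (x : R) :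
    (ascPochhammer R n).eval x = ∏ j ∈ Finset.range n, (x + j) := by
  induction n with
  | zero => simp
  | succ n ih => rw [ascPochhammer_succ_eval, ih, Finset.prod_range_succ]

variable {K : Type*} [Field K] {r : ℕ}

theorem prod_add_div_add_mul_pow (hr : (r : K) ≠ 0) (n : ℕ) (x : K) :
    (∏ i ∈ Finset.range r, ((x + i) / r + n)) * (r : K) ^ r =
      ∏ i ∈ Finset.range r, (x + (n * r + i : ℕ)) := by
  calc (∏ i ∈ Finset.range r, ((x + i) / r + n)) * (r : K) ^ r
      = ∏ i ∈ Finset.range r, ((x + i) / r + n) * r := by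
        rw [← Finset.prod_mul_pow_card, Finset.card_range]
    _ = ∏ i ∈ Finset.range r, (x + (n * r + i : ℕ)) := by
        refine Finset.prod_congr rfl fun i _ => ?_
        push_cast
        field_simp
        ring

theorem ascPochhammer_eval_mul_eq_prod (hr : (r : K) ≠ 0) (n : ℕ) (x : K) :
    (ascPochhammer K (n * r)).eval x =
      (∏ i ∈ Finset.range r, (ascPochhammer K n).eval ((x + i) / r)) * (r : K) ^ (n * r) := by
  induction n with
  | zero => simp
  | succ n ih =>
    rw [ascPochhammer_eval_eq_prod_range] at ih ⊢
    simp only [ascPochhammer_succ_eval, Finset.prod_mul_distrib]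
    rw [Nat.succ_mul, Finset.prod_range_add, ih, ← prod_add_div_add_mul_pow hr, pow_add]
    ring

theorem prod_ascPochhammer_one_sub_div_mul_pow (hr : (r : K) ≠ 0) (n : ℕ) :
    (∏ i ∈ Finset.range r, (ascPochhammer K n).eval (1 - (i : K) / r)) * (r : K) ^ (n * r) =
      ((n * r)! : K) := by
  have reflect : ∏ i ∈ Finset.range r, (ascPochhammer K n).eval (1 - (i : K) / r) =
      ∏ i ∈ Finset.range r, (ascPochhammer K n).eval ((1 + (i : K)) / r) := by
    rw [← Finset.prod_range_reflect]
    refine Finset.prod_congr rfl fun i hi => ?_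
    have hir : i + 1 ≤ r := Finset.mem_range.mp hi
    rw [Nat.sub_sub, add_comm 1 i, Nat.cast_sub hir]
    congr 1
    field_simp
    push_cast
    ring
  rw [reflect, ← ascPochhammer_eval_mul_eq_prod hr, ascPochhammer_eval_one]

end Pochhammer

section Multisection

theorem sum_range_pow_pow_eq_ite {R : Type*} [CommRing R] [IsDomain R] {ζ : R} {r : ℕ}
    (hζ : IsPrimitiveRoot ζ r) (m : ℕ) :
    ∑ k ∈ Finset.range r, (ζ ^ k) ^ m = if r ∣ m then (r : R) else 0 := by
  simp only [pow_right_comm ζ _ m]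
  split_ifs with hm
  · simp [(hζ.pow_eq_one_iff_dvd m).mpr hm]
  · have hne : ζ ^ m - 1 ≠ 0 := sub_ne_zero.mpr fun h => hm ((hζ.pow_eq_one_iff_dvd m).mp h)
    refine (mul_eq_zero.mp ?_).resolve_right hne
    rw [geom_sum_mul, pow_right_comm, hζ.pow_eq_one, one_pow, sub_self]

theorem hasSum_pow_smul_multisection {K E : Type*} [Field K] [AddCommMonoid E] [Module K E]
    [TopologicalSpace E] [ContinuousAdd E] [ContinuousConstSMul K E] {ζ : K} {r : ℕ} [NeZero r]
    (hζ : IsPrimitiveRoot ζ r) {z : K} {c s : ℕ → E}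
    (hs : ∀ k ∈ Finset.range r, HasSum (fun m => (ζ ^ k * z) ^ m • c m) (s k)) :
    HasSum (fun n => z ^ (n * r) • c (n * r)) ((r : K)⁻¹ • ∑ k ∈ Finset.range r, s k) := by
  have hr : (r : K) ≠ 0 := hζ.neZero'.ne
  have average (m : ℕ) : (r : K)⁻¹ • ∑ k ∈ Finset.range r, (ζ ^ k * z) ^ m • c m =
      if r ∣ m then z ^ m • c m else 0 := by
    simp only [mul_pow, mul_smul, ← Finset.sum_smul, sum_range_pow_pow_eq_ite hζ m]
    split_ifs <;> simp [hr]
  have hsum := (hasSum_sum hs).const_smul (r : K)⁻¹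
  simp only [average] at hsum
  have hinj : Function.Injective (· * r) := mul_left_injective₀ (NeZero.ne r)
  rw [← hinj.hasSum_iff] at hsum
  · simpa [Function.comp_def] using hsum
  · intro m hm
    exact if_neg fun ⟨n, hn⟩ => hm ⟨n, by rw [hn, mul_comm]⟩

theorem hasSum_exp_multisection {ζ : ℂ} {r : ℕ} [NeZero r] (hζ : IsPrimitiveRoot ζ r) (z : ℂ) :
    HasSum (fun n => z ^ (n * r) / ((n * r)! : ℂ))
      ((r : ℂ)⁻¹ * ∑ k ∈ Finset.range r, Complex.exp (ζ ^ k * z)) := by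
  simp only [div_eq_mul_inv, ← smul_eq_mul (a := z ^ _), ← smul_eq_mul (a := (r : ℂ)⁻¹)]
  refine hasSum_pow_smul_multisection (c := fun m => (m ! : ℂ)⁻¹) hζ fun k _ => ?_
  simpa only [Complex.exp_eq_exp_ℂ, smul_eq_mul, div_eq_mul_inv] using
    NormedSpace.expSeries_div_hasSum_exp (ζ ^ k * z)

end Multisection

theorem isPrimitiveRoot_om {r : ℕ} (hr : r ≠ 0) : IsPrimitiveRoot (om r) r :=
  Complex.isPrimitiveRoot_exp r hr

theorem th_pow_self {r : ℕ} (hr : r ≠ 0) : th r ^ r = -1 := by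
  rw [th, ← Complex.exp_nat_mul, mul_div_cancel₀ _ (Nat.cast_ne_zero.mpr hr),
    Complex.exp_pi_mul_I]

theorem prod_poch_one_sub_div_mul_pow {r : ℕ} (hr : r ≠ 0) (n : ℕ) :
    (∏ i ∈ Finset.range r, ((poch (1 - (i : ℝ) / r) n : ℝ) : ℂ)) * (r : ℂ) ^ (n * r) =
      ((n * r)! : ℂ) := by
  exact_mod_cast prod_ascPochhammer_one_sub_div_mul_pow (K := ℝ) (Nat.cast_ne_zero.mpr hr) n

theorem cosr_eq_tsum_div_factorial {r : ℕ} (hr : r ≠ 0) (z : ℂ) :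
    cosr r z = ∑' n : ℕ, (th r * z) ^ (n * r) / ((n * r)! : ℂ) := by
  refine tsum_congr fun n => ?_
  rw [prod_poch_one_sub_div_mul_pow hr, mul_pow, pow_mul' (th r), th_pow_self hr]

theorem stmt16 (r : ℕ) (hr : 2 ≤ r) :
    ∀ z : ℂ, (r : ℂ)⁻¹ * ∑ k ∈ Finset.range r, Complex.exp (th r * (om r ^ k * z)) = cosr r z := by
  intro z
  have hr0 : r ≠ 0 := by omega
  have : NeZero r := ⟨hr0⟩
  simp only [mul_left_comm (th r)]
  rw [cosr_eq_tsum_div_factorial hr0]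
  exact (hasSum_exp_multisection (isPrimitiveRoot_om hr0) (th r * z)).tsum_eq.symm
end
end
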